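/- arXiv:1408.0409 — 4 statements merged into one kernel-verified Lean document; each statement's English description precedes it below -/
import Mathlib

section
/- There is an absolute constant C > 0 such that for every integer n ≥ 2, every graph G on n vertices and every integer Δ with 2 ≤ Δ ≤ n, there exists a set Z of vertices of G with |Z| ≤ C · (n/Δ) · log n such that every vertex of G of degree at least Δ has at least two of its neighbors belonging to Z. -/
open Finset in
/-- Averaging: some point lies in at least a `k / |V|` fraction of sets of size at least `k`. -/
theorem exists_mul_card_le_card_mul_card_filter_mem {ι V : Type*} [Fintype V] [Nonempty V]
    [DecidableEq V] (S : Finset ι) (A : ι → Finset V) (k : ℕ) (hA : ∀ i ∈ S, k ≤ (A i).card) :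
    ∃ x : V, k * S.card ≤ Fintype.card V * (S.filter fun i => x ∈ A i).card := by
  have hcount : ∑ x : V, (S.filter fun i => x ∈ A i).card = ∑ i ∈ S, (A i).card := by
    simp only [card_filter]
    rw [sum_comm]
    simp
  have hsum : S.card * k ≤ ∑ i ∈ S, (A i).card := by
    simpa using card_nsmul_le_sum S (fun i => (A i).card) k hA
  by_contra! h
  have hlt : ∑ x : V, Fintype.card V * (S.filter fun i => x ∈ A i).card
      < ∑ _x : V, k * S.card :=
    sum_lt_sum_of_nonempty univ_nonempty fun x _ => h x
  rw [← mul_sum, hcount, sum_const, card_univ, smul_eq_mul] at hlt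
  have := Nat.mul_le_mul_left (Fintype.card V) hsum
  rw [mul_comm S.card k] at this
  omega

open Finset in
/-- Greedy choice of `t` points leaves at most a `(1 - k / |V|) ^ t` fraction of the sets unhit. -/
theorem exists_card_filter_disjoint_le {ι V : Type*} [Fintype V] [Nonempty V]
    [DecidableEq V] (S : Finset ι) (A : ι → Finset V) (k : ℕ) (hA : ∀ i ∈ S, k ≤ (A i).card)
    (hk : k ≤ Fintype.card V) (t : ℕ) :
    ∃ Z : Finset V, Z.card ≤ t ∧ ((S.filter fun i => Disjoint (A i) Z).card : ℝ)
      ≤ S.card * (1 - (k : ℝ) / Fintype.card V) ^ t := by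
  have hn : (0 : ℝ) < Fintype.card V := by exact_mod_cast Fintype.card_pos
  have hq : 0 ≤ 1 - (k : ℝ) / Fintype.card V := by
    rw [sub_nonneg, div_le_one hn]
    exact_mod_cast hk
  induction t with
  | zero => exact ⟨∅, by simp⟩
  | succ t ih =>
    obtain ⟨Z, hZ, hU⟩ := ih
    set U := S.filter fun i => Disjoint (A i) Z with hUdef
    obtain ⟨x, hx⟩ := exists_mul_card_le_card_mul_card_filter_mem U A k
      fun i hi => hA i (mem_of_mem_filter i hi)
    refine ⟨insert x Z, (card_insert_le x Z).trans (by omega), ?_⟩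
    have hrest : (S.filter fun i => Disjoint (A i) (insert x Z)) = U.filter fun i => x ∉ A i := by
      ext i
      simp only [hUdef, mem_filter, disjoint_insert_right]
      tauto
    have hsplit := card_filter_add_card_filter_not (s := U) (fun i => x ∈ A i)
    rw [hrest]
    have hsplit' : ((U.filter fun i => x ∈ A i).card : ℝ) + (U.filter fun i => x ∉ A i).card
        = U.card := by exact_mod_cast hsplit
    have hx' : (k : ℝ) / Fintype.card V * U.card ≤ (U.filter fun i => x ∈ A i).card := by
      rw [div_mul_eq_mul_div, div_le_iff₀ hn, mul_comm _ (Fintype.card V : ℝ)]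
      exact_mod_cast hx
    calc ((U.filter fun i => x ∉ A i).card : ℝ)
        ≤ U.card * (1 - (k : ℝ) / Fintype.card V) := by linarith
      _ ≤ S.card * (1 - (k : ℝ) / Fintype.card V) ^ t * (1 - (k : ℝ) / Fintype.card V) := by
        gcongr
      _ = _ := by ring

open Finset in
/-- At most `|V|` subsets of `V` of size at least `k` have a hitting set of size at most
`(|V| / k) log |V| + 1`. -/
theorem exists_hitting_set {ι V : Type*} [Fintype V] [Nonempty V]
    [DecidableEq V] (S : Finset ι) (A : ι → Finset V) (k : ℕ) (hA : ∀ i ∈ S, k ≤ (A i).card)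
    (hk₀ : 0 < k) (hk : k ≤ Fintype.card V) (hS : S.card ≤ Fintype.card V) :
    ∃ Z : Finset V, (Z.card : ℝ) ≤ (Fintype.card V : ℝ) / k * Real.log (Fintype.card V) + 1 ∧
      ∀ i ∈ S, ∃ z ∈ Z, z ∈ A i := by
  have hn : (0 : ℝ) < Fintype.card V := by exact_mod_cast Fintype.card_pos
  have hn₁ : (1 : ℝ) ≤ Fintype.card V := by exact_mod_cast Fintype.card_pos (α := V)
  have hk₀' : (0 : ℝ) < k := by exact_mod_cast hk₀
  set L := (Fintype.card V : ℝ) / k * Real.log (Fintype.card V) with hL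
  have hL₀ : 0 ≤ L := mul_nonneg (by positivity) (Real.log_nonneg hn₁)
  obtain ⟨Z, hZ, hU⟩ := exists_card_filter_disjoint_le S A k hA hk (⌊L⌋₊ + 1)
  have hq : 0 ≤ 1 - (k : ℝ) / Fintype.card V := by
    rw [sub_nonneg, div_le_one hn]
    exact_mod_cast hk
  have hexp : (1 - (k : ℝ) / Fintype.card V) ^ (⌊L⌋₊ + 1) < (Fintype.card V : ℝ)⁻¹ := by
    calc (1 - (k : ℝ) / Fintype.card V) ^ (⌊L⌋₊ + 1)
        ≤ Real.exp (-((k : ℝ) / Fintype.card V)) ^ (⌊L⌋₊ + 1) :=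
          pow_le_pow_left₀ hq (Real.one_sub_le_exp_neg _) _
      _ = Real.exp (-((k : ℝ) / Fintype.card V * (⌊L⌋₊ + 1))) := by
          rw [← Real.exp_nat_mul]
          push_cast
          ring_nf
      _ < Real.exp (-((k : ℝ) / Fintype.card V * L)) := by
          have := Nat.lt_floor_add_one L
          gcongr
      _ = (Fintype.card V : ℝ)⁻¹ := by
          have : (k : ℝ) / Fintype.card V * L = Real.log (Fintype.card V) := by
            rw [hL]
            field_simp
          rw [this, Real.exp_neg, Real.exp_log hn]
  refine ⟨Z, ?_, fun i hi => ?_⟩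
  · have hZ' : (Z.card : ℝ) ≤ ⌊L⌋₊ + 1 := by exact_mod_cast hZ
    linarith [Nat.floor_le hL₀]
  · have hlt : ((S.filter fun i => Disjoint (A i) Z).card : ℝ) < 1 := by
      calc ((S.filter fun i => Disjoint (A i) Z).card : ℝ)
          ≤ S.card * (1 - (k : ℝ) / Fintype.card V) ^ (⌊L⌋₊ + 1) := hU
        _ ≤ Fintype.card V * (1 - (k : ℝ) / Fintype.card V) ^ (⌊L⌋₊ + 1) := by gcongr
        _ < Fintype.card V * (Fintype.card V : ℝ)⁻¹ := by gcongr
        _ = 1 := mul_inv_cancel₀ hn.ne'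
    have hempty : (S.filter fun i => Disjoint (A i) Z) = ∅ := by
      rw [← card_eq_zero]
      exact Nat.lt_one_iff.mp (by exact_mod_cast hlt)
    obtain ⟨z, hzA, hzZ⟩ := not_disjoint_iff.mp (filter_eq_empty_iff.mp hempty hi)
    exact ⟨z, hzZ, hzA⟩

/-- **Existence of small FT-center sets (Obs. `obs:clust_prop`(4)).** There is an
absolute constant `C > 0` such that for every graph `G` on `n ≥ 2` vertices and
every threshold `2 ≤ Δ ≤ n` there is a set `Z` of at most `C · (n/Δ) · log n`
vertices such that every vertex of degree at least `Δ` has at least two neighbors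
in `Z`. -/
theorem exists_ft_center_set :
    ∃ C : ℝ, 0 < C ∧
      ∀ (n : ℕ), 2 ≤ n →
        ∀ (V : Type) [Fintype V], ∀ (G : SimpleGraph V), Fintype.card V = n →
          ∀ Δ : ℕ, 2 ≤ Δ → Δ ≤ n →
            ∃ Z : Set V,
              ((Z.ncard : ℝ) ≤ C * ((n : ℝ) / (Δ : ℝ)) * Real.log n) ∧
              ∀ v : V, Δ ≤ (G.neighborSet v).ncard →
                2 ≤ ((G.neighborSet v) ∩ Z).ncard := by
  classical
  refine ⟨8, by norm_num, fun n hn V _ G hV Δ hΔ hΔn => ?_⟩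
  subst hV
  have : Nonempty V := Fintype.card_pos_iff.mp (by omega)
  set S : Finset V := Finset.univ.filter fun v => Δ ≤ (G.neighborFinset v).card with hS
  have hSV : S.card ≤ Fintype.card V := Finset.card_le_univ S
  obtain ⟨Z₁, hZ₁, hit₁⟩ := exists_hitting_set S (fun v => G.neighborFinset v) Δ
    (fun v hv => (Finset.mem_filter.mp hv).2) (by omega) hΔn hSV
  choose! f hfZ hfN using hit₁
  obtain ⟨Z₂, hZ₂, hit₂⟩ := exists_hitting_set S (fun v => (G.neighborFinset v).erase (f v))
    (Δ - 1) (fun v hv => by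
      have hdeg := (Finset.mem_filter.mp hv).2
      rw [Finset.card_erase_of_mem (hfN v hv)]
      omega) (by omega) (by omega) hSV
  refine ⟨↑(Z₁ ∪ Z₂), ?_, fun v hv => ?_⟩
  · rw [Set.ncard_coe_finset]
    have hcard : ((Z₁ ∪ Z₂).card : ℝ) ≤ Z₁.card + Z₂.card := by
      exact_mod_cast Finset.card_union_le Z₁ Z₂
    have hΔ' : (2 : ℝ) ≤ Δ := by exact_mod_cast hΔ
    have hn' : (2 : ℝ) ≤ Fintype.card V := by exact_mod_cast hn
    have hlog : 1 / 2 ≤ Real.log (Fintype.card V) :=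
      (by linarith [Real.log_two_gt_d9] : 1 / 2 ≤ Real.log 2).trans
        (Real.log_le_log (by norm_num) hn')
    have hratio : (1 : ℝ) ≤ (Fintype.card V : ℝ) / Δ := by
      rw [one_le_div (by linarith)]
      exact_mod_cast hΔn
    have hpred : (Fintype.card V : ℝ) / ((Δ - 1 : ℕ) : ℝ) ≤ 2 * ((Fintype.card V : ℝ) / Δ) := by
      rw [Nat.cast_sub (by omega), Nat.cast_one, ← mul_div_assoc,
        div_le_div_iff₀ (by linarith) (by linarith)]
      nlinarith
    have hpred' := mul_le_mul_of_nonneg_right hpred (by linarith : 0 ≤ Real.log (Fintype.card V))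
    have hone : 1 / 2 ≤ (Fintype.card V : ℝ) / Δ * Real.log (Fintype.card V) := by nlinarith
    linarith
  · have hvS : v ∈ S := by
      rw [hS, Finset.mem_filter, ← Set.ncard_coe_finset, SimpleGraph.coe_neighborFinset]
      exact ⟨Finset.mem_univ v, hv⟩
    obtain ⟨z, hzZ, hzN⟩ := hit₂ v hvS
    obtain ⟨hne, hzN⟩ := Finset.mem_erase.mp hzN
    have hfv := hfN v hvS
    rw [SimpleGraph.mem_neighborFinset] at hzN hfv
    rw [← Set.ncard_pair hne]
    refine Set.ncard_le_ncard ?_ (Set.toFinite _)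
    rintro w (rfl | rfl)
    · exact ⟨hzN, by simp [hzZ]⟩
    · exact ⟨hfv, by simp [hfZ v hvS]⟩
end

section
/- Let G be a graph on n vertices, let s and t be vertices of G, and let P be a shortest s–t path in G. Then for every integer Δ ≥ 1, the number of vertices on P whose degree in G is at least Δ is at most 3n/Δ. -/
namespace SimpleGraph

variable {V : Type*} {G : SimpleGraph V}

/-- On a shortest walk from `s`, a vertex is determined by its distance from `s`. -/
theorem Walk.getVert_dist_of_length_eq_dist [DecidableEq V] {s t u : V} (p : G.Walk s t)
    (hlen : p.length = G.dist s t) (hu : u ∈ p.support) : p.getVert (G.dist s u) = u := by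
  obtain ⟨q, hq⟩ := (p.takeUntil u hu).reachable.exists_walk_length_eq_dist
  have hle : G.dist s u ≤ (p.takeUntil u hu).length := dist_le _
  have hge := dist_le (q.append (p.dropUntil u hu))
  have hsplit := congrArg Walk.length (p.take_spec hu)
  rw [Walk.length_append] at hge hsplit
  have heq : G.dist s u = (p.takeUntil u hu).length := by omega
  rw [heq, Walk.getVert_length_takeUntil]

theorem Reachable.dist_le_dist_add_one_of_adj {s u w : V} (hu : G.Reachable s u)
    (h : G.Adj u w) : G.dist s w ≤ G.dist s u + 1 := by
  obtain ⟨q, hq⟩ := hu.exists_walk_length_eq_dist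
  simpa [hq] using dist_le (q.concat h)

/-- Every vertex has at most three neighbors on a shortest walk. -/
theorem Walk.card_support_filter_adj_le_three [DecidableEq V] {s t : V} (p : G.Walk s t)
    (hlen : p.length = G.dist s t) (w : V) (A : Finset V)
    (hA : ∀ u ∈ A, u ∈ p.support ∧ G.Adj u w) : A.card ≤ 3 := by
  have hcard : (Finset.Icc (G.dist s w - 1) (G.dist s w + 1)).card ≤ 3 := by
    rw [Nat.card_Icc]
    omega
  refine le_trans (Finset.card_le_card_of_injOn (G.dist s) ?_ ?_) hcard
  · intro u hu
    obtain ⟨hus, huw⟩ := hA u hu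
    have hr : G.Reachable s u := (p.takeUntil u hus).reachable
    have hw := hr.dist_le_dist_add_one_of_adj huw
    have hu' := (hr.trans huw.reachable).dist_le_dist_add_one_of_adj huw.symm
    simp only [Finset.coe_Icc, Set.mem_Icc]
    omega
  · intro u hu v hv huv
    rw [← p.getVert_dist_of_length_eq_dist hlen (hA u hu).1,
      ← p.getVert_dist_of_length_eq_dist hlen (hA v hv).1, huv]

end SimpleGraph

/-- **Few heavy vertices on a shortest path (Obs. `obs:nmissing`).** If `P` is a
shortest `s–t` path in a graph `G` on `n` vertices, then for every `Δ ≥ 1` the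
number of vertices on `P` of degree at least `Δ` is at most `3n/Δ`. -/
theorem heavy_vertices_on_shortest_path
    {V : Type*} [Fintype V] [DecidableEq V] (G : SimpleGraph V) (s t : V)
    (p : G.Walk s t) (hp : p.IsPath) (hlen : p.length = G.dist s t)
    (Δ : ℕ) (hΔ : 1 ≤ Δ) :
    (({u ∈ p.support.toFinset | Δ ≤ (G.neighborSet u).ncard}).card : ℝ)
      ≤ 3 * (Fintype.card V : ℝ) / (Δ : ℝ) := by
  classical
  have hcount : ({u ∈ p.support.toFinset | Δ ≤ (G.neighborSet u).ncard}).card * Δ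
      ≤ (Finset.univ : Finset V).card * 3 := by
    refine Finset.card_mul_le_card_mul G.Adj (fun u hu => ?_) (fun w _ => ?_)
    · have hdeg := (Finset.mem_filter.mp hu).2
      rw [Set.ncard_eq_toFinset_card'] at hdeg
      refine hdeg.trans (Finset.card_le_card fun w hw => ?_)
      simpa [Finset.mem_bipartiteAbove] using hw
    · refine p.card_support_filter_adj_le_three hlen w _ fun u hu => ?_
      rw [Finset.mem_bipartiteBelow, Finset.mem_filter, List.mem_toFinset] at hu
      exact ⟨hu.1.1, hu.2⟩
  rw [le_div_iff₀ (by exact_mod_cast hΔ), mul_comm (3 : ℝ)]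
  exact_mod_cast hcount
end

section
/- Let G be a graph, let s and t be vertices of G, and let P be a shortest s–t path in G. Then every vertex of G has at most 3 neighbors among the vertices of P. -/
/-- Two vertices of a shortest walk with a common neighbor are at most two steps apart on it. -/
theorem SimpleGraph.Walk.index_le_add_two_of_adj_of_length_eq_dist {V : Type*}
    {G : SimpleGraph V} {s t x : V} (p : G.Walk s t) (hlen : p.length = G.dist s t) {i j : ℕ}
    (hj : j ≤ p.length) (hxi : G.Adj x (p.getVert i)) (hxj : G.Adj x (p.getVert j)) :
    j ≤ i + 2 := by
  have h := G.dist_le ((p.take i).append (.cons hxi.symm (.cons hxj (p.drop j))))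
  simp only [length_append, length_cons, take_length, drop_length] at h
  omega

/-- **At most three neighbors on a shortest path.** If `P` is a shortest `s–t` path
in a graph `G`, then every vertex of `G` has at most `3` neighbors among the
vertices of `P`. -/
theorem neighbors_on_shortest_path_le_three
    {V : Type*} [Fintype V] [DecidableEq V] (G : SimpleGraph V)
    [DecidableRel G.Adj] (s t : V)
    (p : G.Walk s t) (hp : p.IsPath) (hlen : p.length = G.dist s t) :
    ∀ x : V, ({u ∈ p.support.toFinset | G.Adj x u}).card ≤ 3 := by
  intro x
  by_cases hx : ∃ i, i ≤ p.length ∧ G.Adj x (p.getVert i)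
  · set m := Nat.find hx
    have hsub : {u ∈ p.support.toFinset | G.Adj x u} ⊆ (Finset.Icc m (m + 2)).image p.getVert := by
      intro u hu
      simp only [Finset.mem_filter, List.mem_toFinset] at hu
      obtain ⟨j, rfl, hj⟩ := SimpleGraph.Walk.mem_support_iff_exists_getVert.mp hu.1
      exact Finset.mem_image_of_mem _ (Finset.mem_Icc.mpr ⟨Nat.find_min' hx ⟨hj, hu.2⟩,
        p.index_le_add_two_of_adj_of_length_eq_dist hlen hj (Nat.find_spec hx).2 hu.2⟩)
    calc _ ≤ _ := Finset.card_le_card hsub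
      _ ≤ (Finset.Icc m (m + 2)).card := Finset.card_image_le
      _ = 3 := by simp only [Nat.card_Icc]; omega
  · rw [Finset.filter_false_of_mem]
    · simp
    · intro u hu hxu
      obtain ⟨j, rfl, hj⟩ :=
        SimpleGraph.Walk.mem_support_iff_exists_getVert.mp (List.mem_toFinset.mp hu)
      exact hx ⟨j, hj, hxu⟩
end

section
/- Let T be a finite tree, let t be a vertex of T, and let S be a nonempty set of vertices of T such that every leaf of T belongs to S ∪ {t}. Let V⁺ consist of t, the vertices of S, and all vertices of degree at least 3 in T. Call two distinct vertices x, y ∈ V⁺ adjacent if the unique x–y path in T contains no vertex of V⁺ other than x and y. Then: (1) |V⁺| ≤ 2|S| + 1; (2) the number of adjacent pairs {x, y} of vertices of V⁺ is at most 2|S|; and (3) every edge of T lies on the unique path in T between some adjacent pair of V⁺. -/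
namespace SimpleGraph

variable {V : Type*} {G : SimpleGraph V}

/-- Two nontrivial paths with the same first edge, each meeting `A` only in its endpoints, end at
the same vertex of `A`, provided every vertex outside `A` has degree `2`. -/
lemma Walk.IsPath.end_eq_of_snd_eq [G.LocallyFinite] {A : Set V}
    (hA : ∀ v ∉ A, G.degree v = 2) {x y z : V} {p : G.Walk x y} {q : G.Walk x z}
    (hp : p.IsPath) (hq : q.IsPath) (hy : y ∈ A) (hz : z ∈ A) (hxy : x ≠ y) (hxz : x ≠ z)
    (hpA : ∀ u ∈ p.support, u ∈ A → u = x ∨ u = y)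
    (hqA : ∀ u ∈ q.support, u ∈ A → u = x ∨ u = z) (h : p.snd = q.snd) : y = z := by
  classical
  induction p with
  | nil => exact absurd rfl hxy
  | @cons x v y hxv p ih =>
    cases q with
    | nil => exact absurd rfl hxz
    | @cons _ w _ hxw q =>
      obtain rfl : v = w := by simpa using h
      rw [cons_isPath_iff] at hp hq
      simp only [support_cons, List.mem_cons, forall_eq_or_imp] at hpA hqA
      by_cases hv : v ∈ A
      · have h₁ := hpA.2 v p.start_mem_support hv
        have h₂ := hqA.2 v q.start_mem_support hv
        have := hxv.ne'
        simp_all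
      · have hvy : v ≠ y := fun e ↦ hv (e ▸ hy)
        have hvz : v ≠ z := fun e ↦ hv (e ▸ hz)
        have hpn : ¬ p.Nil := fun hn ↦ hvy hn.eq
        have hqn : ¬ q.Nil := fun hn ↦ hvz hn.eq
        refine ih hp.1 hq.1 hy hvy hvz ?_ ?_ ?_
        · exact fun u hu huA ↦
            .inr ((hpA.2 u hu huA).resolve_left fun e ↦ hp.2 (e ▸ hu))
        · exact fun u hu huA ↦
            .inr ((hqA.2 u hu huA).resolve_left fun e ↦ hq.2 (e ▸ hu))
        · by_contra hne
          have hxp : x ≠ p.snd := fun e ↦ hp.2 (e ▸ p.getVert_mem_support 1)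
          have hxq : x ≠ q.snd := fun e ↦ hq.2 (e ▸ q.getVert_mem_support 1)
          have hsub : ({x, p.snd, q.snd} : Finset V) ⊆ G.neighborFinset v := by
            simp [Finset.insert_subset_iff, hxv.symm, p.adj_snd hpn, q.adj_snd hqn]
          have hle := Finset.card_le_card hsub
          rw [Finset.card_eq_three.mpr ⟨_, _, _, hxp, hxq, hne, rfl⟩,
            card_neighborFinset_eq_degree, hA v hv] at hle
          omega

/-- If all vertices of a finite tree outside `A` have degree `2`, then the degrees in `A` add up
to `2 * #A - 2`. -/
lemma IsTree.sum_degree_add_two [Fintype V] [DecidableRel G.Adj] (hG : G.IsTree) {A : Finset V}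
    (hA : ∀ v ∉ A, G.degree v = 2) : ∑ v ∈ A, G.degree v + 2 = 2 * A.card := by
  classical
  have hedge := hG.card_edgeFinset
  have hsum := G.sum_degrees_eq_twice_card_edges
  rw [← Finset.sum_add_sum_compl A,
    Finset.sum_congr rfl fun v hv ↦ hA v (Finset.mem_compl.mp hv)] at hsum
  have hcard := A.card_add_card_compl
  simp only [Finset.sum_const, smul_eq_mul] at hsum
  omega

/-- In a finite nontrivial tree whose vertices outside `A` have degree `2`, if the vertices of `A`
outside `B` have degree at least `3`, then `#A ≤ 2 * #B - 2`. -/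
lemma IsTree.card_add_two_le [Fintype V] [Nontrivial V] [DecidableRel G.Adj] (hG : G.IsTree)
    {A B : Finset V} (hBA : B ⊆ A) (hA : ∀ v ∉ A, G.degree v = 2)
    (hB : ∀ v ∈ A, v ∉ B → 3 ≤ G.degree v) : A.card + 2 ≤ 2 * B.card := by
  classical
  have hsum := hG.sum_degree_add_two hA
  rw [← Finset.sum_sdiff hBA] at hsum
  have h₁ : B.card • 1 ≤ ∑ v ∈ B, G.degree v :=
    Finset.card_nsmul_le_sum _ _ _ fun v _ ↦ hG.connected.preconnected.degree_pos_of_nontrivial v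
  have h₃ : (A \ B).card • 3 ≤ ∑ v ∈ A \ B, G.degree v :=
    Finset.card_nsmul_le_sum _ _ _ fun v hv ↦
      hB v (Finset.mem_sdiff.mp hv).1 (Finset.mem_sdiff.mp hv).2
  have := Finset.card_sdiff_add_card_eq_card hBA
  simp only [smul_eq_mul] at h₁ h₃
  omega

/-- Every edge of a finite forest lies on a path between two distinct leaves. -/
lemma IsAcyclic.exists_isPath_degree_eq_one_of_mem_edgeSet [Finite V] [G.LocallyFinite]
    (hG : G.IsAcyclic) {e : Sym2 V} (he : e ∈ G.edgeSet) :
    ∃ (x y : V) (p : G.Walk x y), p.IsPath ∧ e ∈ p.edges ∧ x ≠ y ∧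
      G.degree x = 1 ∧ G.degree y = 1 := by
  classical
  have := Fintype.ofFinite V
  let P : ℕ → Prop := fun n ↦ ∃ (x y : V) (p : G.Walk x y), p.IsPath ∧ e ∈ p.edges ∧ p.length = n
  have hP : ∃ n ≤ Fintype.card V, P n := by
    induction e with
    | h u v =>
      rw [mem_edgeSet] at he
      have hp : he.toWalk.IsPath := by simp [he.ne]
      exact ⟨_, hp.length_lt.le, u, v, _, hp, by simp, rfl⟩
  obtain ⟨m, hm, hPm⟩ := hP
  obtain ⟨x, y, p, hp, hep, hlen⟩ := Nat.findGreatest_spec hm hPm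
  have hmax {x' y' : V} (q : G.Walk x' y') (hq : q.IsPath) (heq : e ∈ q.edges) :
      q.length ≤ p.length :=
    hlen ▸ Nat.le_findGreatest hq.length_lt.le ⟨x', y', q, hq, heq, rfl⟩
  have hnil : ¬ p.Nil := fun hn ↦ by simp [Walk.edges_eq_nil.mpr hn] at hep
  refine ⟨x, y, p, hp, hep, hp.nil_iff_eq.not.mp hnil, ?_, ?_⟩ <;>
    rw [degree_eq_one_iff_existsUnique_adj]
  · refine ⟨_, p.adj_snd hnil, fun w hadj ↦ hG.eq_snd_of_adj_start hp hadj ?_⟩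
    by_contra hw
    have := hmax _ (hp.cons (h := hadj.symm) hw) (by simp [hep])
    simp at this
  · refine ⟨_, (p.adj_penultimate hnil).symm, fun w hadj ↦ hG.eq_penultimate_of_adj_end hp hadj ?_⟩
    by_contra hw
    have := hmax _ (hp.concat hw hadj) (by simp [Walk.edges_concat, hep])
    simp at this

/-- If an edge lies on a path between two vertices of `A`, it lies on such a path that meets `A`
only in its endpoints. -/
lemma Walk.IsPath.exists_isPath_mem_edges_forall_mem_support {A : Set V} {e : Sym2 V} {x y : V}
    {p : G.Walk x y} (hp : p.IsPath) (he : e ∈ p.edges) (hx : x ∈ A) (hy : y ∈ A) :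
    ∃ (x' y' : V) (q : G.Walk x' y'), x' ∈ A ∧ y' ∈ A ∧ q.IsPath ∧ e ∈ q.edges ∧
      ∀ u ∈ q.support, u ∈ A → u = x' ∨ u = y' := by
  classical
  induction hn : p.length using Nat.strong_induction_on generalizing x y p with
  | _ n ih =>
    subst hn
    by_cases h : ∀ u ∈ p.support, u ∈ A → u = x ∨ u = y
    · exact ⟨x, y, p, hx, hy, hp, he, h⟩
    · push Not at h
      obtain ⟨u, hu, huA, hux, huy⟩ := h
      have he' := he
      rw [← p.take_spec hu, edges_append, List.mem_append] at he'
      rcases he' with he' | he'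
      · exact ih _ (length_takeUntil_lt_length hu huy) (hp.takeUntil hu) he' hx huA rfl
      · exact ih _ (length_dropUntil_lt_length hu hux) (hp.dropUntil hu) he' huA hy rfl

/-- Suppose all vertices of a finite tree outside `A` have degree `2`, and any two vertices
adjacent in `H` are the ends of a path that meets `A` only in these ends. Then `H` has fewer
edges than `A` has vertices. -/
lemma IsTree.card_edgeFinset_lt_of_forall_adj_exists_isPath [Fintype V] [DecidableRel G.Adj]
    (hG : G.IsTree) {A : Finset V} (hA : ∀ v ∉ A, G.degree v = 2)
    (H : SimpleGraph V) [DecidableRel H.Adj] (hmem : ∀ x y, H.Adj x y → x ∈ A)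
    (hH : ∀ x y, H.Adj x y → ∃ p : G.Walk x y, p.IsPath ∧
      ∀ u ∈ p.support, u ∈ A → u = x ∨ u = y) : H.edgeFinset.card + 1 ≤ A.card := by
  classical
  choose p hp hpA using hH
  have hle (x : V) : H.degree x ≤ G.degree x := by
    refine Finset.card_le_card_of_injOn
      (fun y ↦ if h : H.Adj x y then (p x y h).snd else y) (fun y hy ↦ ?_) fun y hy z hz h ↦ ?_
    · have hxy : H.Adj x y := by simpa using hy
      simpa [hxy] using (p x y hxy).adj_snd fun hn ↦ hxy.ne hn.eq
    · have hxy : H.Adj x y := by simpa using hy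
      have hxz : H.Adj x z := by simpa using hz
      simp only [hxy, hxz, dif_pos] at h
      exact (hp x y hxy).end_eq_of_snd_eq (A := A) (by simpa using hA) (hp x z hxz)
        (hmem y x hxy.symm) (hmem z x hxz.symm) hxy.ne hxz.ne (hpA x y hxy) (hpA x z hxz) h
  have hzero (x : V) (hx : x ∉ A) : H.degree x = 0 := by
    by_contra h
    obtain ⟨y, hxy⟩ := (H.degree_pos_iff_exists_adj x).mp (Nat.pos_of_ne_zero h)
    exact hx (hmem x y hxy)
  have hsum : ∑ x ∈ A, H.degree x = 2 * H.edgeFinset.card := by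
    rw [← H.sum_degrees_eq_twice_card_edges]
    exact Finset.sum_subset A.subset_univ fun x _ hx ↦ hzero x hx
  have := hG.sum_degree_add_two hA
  have := Finset.sum_le_sum fun x (_ : x ∈ A) ↦ hle x
  omega

end SimpleGraph

/-- **Branching structure of the tree of source paths (Obs. `obs:xyt`).**
Let `T` be a finite tree, `t` a vertex, and `S` a nonempty set of vertices such
that every leaf of `T` belongs to `S ∪ {t}`.  Let `V⁺` consist of `t`, the vertices
of `S` and all vertices of degree at least `3`; call `x ≠ y` in `V⁺` *adjacent* if
the unique `x–y` path in `T` meets `V⁺` only in `x` and `y`.  Then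
(1) `|V⁺| ≤ 2|S| + 1`, (2) there are at most `2|S|` adjacent (unordered) pairs, and
(3) every edge of `T` lies on the unique path between some adjacent pair. -/
theorem tree_branching_structure
    {V : Type*} [Fintype V] [DecidableEq V] (T : SimpleGraph V) (hT : T.IsTree)
    (t : V) (S : Finset V) (hS : S.Nonempty)
    (hleaf : ∀ u : V, (T.neighborSet u).ncard = 1 → u ∈ S ∨ u = t)
    (Vplus : Set V)
    (hVplus : Vplus = {t} ∪ ↑S ∪ {u : V | 3 ≤ (T.neighborSet u).ncard})
    (AdjPair : V → V → Prop)
    (hAdjPair : ∀ x y : V, AdjPair x y ↔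
      (x ∈ Vplus ∧ y ∈ Vplus ∧ x ≠ y ∧
        ∀ (p : T.Walk x y), p.IsPath →
          ∀ u ∈ p.support, u ∈ Vplus → u = x ∨ u = y)) :
    Vplus.ncard ≤ 2 * S.card + 1 ∧
    {e : Sym2 V | ∃ x y : V, e = s(x, y) ∧ AdjPair x y}.ncard ≤ 2 * S.card ∧
    ∀ e ∈ T.edgeSet, ∃ x y : V, AdjPair x y ∧
      ∃ (p : T.Walk x y), p.IsPath ∧ e ∈ p.edges := by
  classical
  have hdeg (u : V) : (T.neighborSet u).ncard = T.degree u := by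
    rw [Set.ncard_eq_toFinset_card']; rfl
  simp only [hdeg] at hleaf hVplus
  obtain ⟨A, rfl⟩ : ∃ A : Finset V, (A : Set V) = Vplus := ⟨Vplus.toFinset, by simp⟩
  have hmemA (u : V) : u ∈ A ↔ u ∈ insert t S ∨ 3 ≤ T.degree u := by
    rw [← Finset.mem_coe, hVplus]
    simp
  have hA (v : V) (hv : v ∉ A) : T.degree v = 2 := by
    rw [hmemA, Finset.mem_insert] at hv
    have : Nontrivial V := ⟨v, t, by tauto⟩
    have hpos := hT.connected.preconnected.degree_pos_of_nontrivial v
    have hne : T.degree v ≠ 1 := fun h ↦ by have := hleaf v h; tauto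
    have : ¬ 3 ≤ T.degree v := by tauto
    omega
  have hcard : A.card ≤ 2 * S.card + 1 := by
    rcases subsingleton_or_nontrivial V with _ | _
    · have := Finset.card_le_one_of_subsingleton A
      omega
    · have h := hT.card_add_two_le (A := A) (B := insert t S)
        (fun v hv ↦ (hmemA v).mpr (.inl hv)) hA
        fun v hv hvB ↦ ((hmemA v).mp hv).resolve_left hvB
      have := Finset.card_insert_le t S
      omega
  refine ⟨by simpa using hcard, ?_, fun e he ↦ ?_⟩
  · let H : SimpleGraph V :=
      { Adj := AdjPair
        symm := ⟨fun x y h ↦ by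
          rw [hAdjPair] at h ⊢
          refine ⟨h.2.1, h.1, h.2.2.1.symm, fun p hp u hu huA ↦ ?_⟩
          exact (h.2.2.2 p.reverse hp.reverse u (by simpa using hu) huA).symm⟩
        loopless := ⟨fun x h ↦ ((hAdjPair x x).mp h).2.2.1 rfl⟩ }
    have hset : {e : Sym2 V | ∃ x y : V, e = s(x, y) ∧ AdjPair x y} = H.edgeFinset := by
      ext e
      induction e with
      | h a b =>
        rw [SimpleGraph.coe_edgeFinset, SimpleGraph.mem_edgeSet]
        refine ⟨?_, fun h ↦ ⟨a, b, rfl, h⟩⟩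
        rintro ⟨x, y, hxy, h⟩
        exact (H.mem_edgeSet).mp (hxy ▸ H.mem_edgeSet.mpr h)
    rw [hset, Set.ncard_coe_finset]
    have := hT.card_edgeFinset_lt_of_forall_adj_exists_isPath hA H
      (fun x y h ↦ ((hAdjPair x y).mp h).1) fun x y h ↦ by
        obtain ⟨p, hp⟩ := hT.connected.exists_isPath x y
        exact ⟨p, hp, ((hAdjPair x y).mp h).2.2.2 p hp⟩
    omega
  · have hleafA (u : V) (hu : T.degree u = 1) : u ∈ (A : Set V) := by
      have := hleaf u hu
      rw [Finset.mem_coe, hmemA, Finset.mem_insert]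
      tauto
    obtain ⟨x, y, p, hp, hep, -, hx, hy⟩ :=
      hT.isAcyclic.exists_isPath_degree_eq_one_of_mem_edgeSet he
    obtain ⟨x, y, q, hx, hy, hq, heq, hqA⟩ :=
      hp.exists_isPath_mem_edges_forall_mem_support hep (hleafA x hx) (hleafA y hy)
    refine ⟨x, y, (hAdjPair x y).mpr ⟨hx, hy, ?_, fun r hr ↦ ?_⟩, q, hq, heq⟩
    · rintro rfl
      simp [SimpleGraph.Walk.edges_eq_nil.mpr (hq.nil_iff_eq.mpr rfl)] at heq
    · rwa [(hT.existsUnique_path x y).unique hr hq]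
end
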